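/- Assume γ_n = n^{o(1)} and γ_n ≫ (log n)^{−(k−2)/2} as n → ∞, and let ε = ε_k = (6k − 11)/(12(k−1)). Define T̄_ε := min{t ∈ ℕ₊ : |X_t| ≥ n^ε}. Then for any fixed η > 0 and all sufficiently large n, with probability 1 − o_n(1): T̄_ε ≤ exp( ((1+η)/2) · (1/γ_n)^{2/(k−2)} ) + (1+η) · log_{k−1}( log_{k−1} n / max{log_{k−1} γ_n, 1} ). -/

import Mathlib

open MeasureTheory ProbabilityTheory Filter Real

/-- The standard Gaussian cumulative distribution function `Φ`. -/
noncomputable def stdGaussCDF (x : ℝ) : ℝ := (gaussianReal 0 1 (Set.Iic x)).toReal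

/-- `C_k = (k-2)^{k-2}/(k-1)^{k-1}`. -/
noncomputable def Ckconst (k : ℕ) : ℝ := ((k : ℝ) - 2) ^ (k - 2) / ((k : ℝ) - 1) ^ (k - 1)

/-- `log_{k-1}(log_{k-1} n / max(log_{k-1} γ, 1))`, the iterated-logarithm quantity. -/
noncomputable def logTerm (k n : ℕ) (γ : ℝ) : ℝ :=
  Real.logb ((k : ℝ) - 1) (Real.logb ((k : ℝ) - 1) n / max (Real.logb ((k : ℝ) - 1) γ) 1)

/-!
Write `d = k - 2`. The map `w ↦ γ w ^ (d + 1)` has the unstable positive fixed point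
`x = γ ^ (-1 / d)`. As long as the process stays below it, every step offers a fresh chance of a
launch: a Gaussian shock slightly larger than `x`, with the same sign as the current position.
By the Gaussian tail a launch takes about `exp (x ^ 2 / 2)` attempts. After a launch the process
grows at least geometrically, so noise bounds that grow geometrically, and hence have summable
failure probabilities, are all respected with high probability; while they are, `log (|X| / x)` is
multiplied by nearly `k - 1` at each step, and the level `n ^ ε` is passed after about
`log_{k-1} (log_{k-1} n / max (log_{k-1} γ) 1)` further steps.

The margin `M` of a launch beyond `x` is kept fixed while `n → ∞`: the failure probability is at
most `exp (-M) + O (M ^ (-2))` for all large `n`, and `M` is arbitrary.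
-/

section Trials

variable {Ω : Type*} {mΩ : MeasurableSpace Ω} {μ : Measure Ω} [IsProbabilityMeasure μ]
  {ℱ : Filtration ℕ mΩ} {F : ℕ → Set Ω} {p : ℝ}

lemma measurableSet_biUnion_range_of_filtration (hF : ∀ t, MeasurableSet[ℱ (t + 1)] (F t))
    (t : ℕ) : MeasurableSet[ℱ t] (⋃ i ∈ Finset.range t, F i) :=
  Finset.measurableSet_biUnion _ fun i hi =>
    ℱ.mono (Finset.mem_range.1 hi) _ (hF i)

lemma measureReal_compl_biUnion_range_le_exp (hF : ∀ t, MeasurableSet[ℱ (t + 1)] (F t))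
    (hp : ∀ t H, MeasurableSet[ℱ t] H → μ.real H * p ≤ μ.real (H ∩ F t)) (N : ℕ) :
    μ.real (⋃ t ∈ Finset.range N, F t)ᶜ ≤ exp (-(N * p)) := by
  induction N with
  | zero => simp
  | succ N ih =>
    set H := (⋃ t ∈ Finset.range N, F t)ᶜ
    have hH : MeasurableSet[ℱ N] H := (measurableSet_biUnion_range_of_filtration hF N).compl
    have hsdiff : (⋃ t ∈ Finset.range (N + 1), F t)ᶜ = H \ F N := by
      rw [Finset.range_add_one, Finset.set_biUnion_insert, Set.compl_union, Set.inter_comm,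
        Set.sdiff_eq]
    have hsplit := measureReal_inter_add_sdiff (μ := μ) (s := H) (ℱ.le _ _ (hF N))
    calc μ.real (⋃ t ∈ Finset.range (N + 1), F t)ᶜ
        = μ.real H - μ.real (H ∩ F N) := by rw [hsdiff]; linarith
      _ ≤ μ.real H * (1 - p) := by linarith [hp N H hH]
      _ ≤ μ.real H * exp (-p) := by gcongr; exact one_sub_le_exp_neg p
      _ ≤ exp (-(N * p)) * exp (-p) := by gcongr
      _ = exp (-((N + 1 : ℕ) * p)) := by rw [← exp_add]; push_cast; ring_nf

lemma not_exists_unspoiled_subset (F : ℕ → Set Ω) (E : ℕ → ℕ → Set Ω) (N m : ℕ) :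
    {ω | ¬ ∃ t < N, ω ∈ F t ∧ ∀ j < m, ω ∉ E t j} ⊆
      (⋃ t ∈ Finset.range N, F t)ᶜ ∪
        ⋃ t ∈ Finset.range N, ⋃ j ∈ Finset.range m, (disjointed F t ∩ E t j) := by
  intro ω hω
  by_cases hsome : ω ∈ ⋃ t ∈ Finset.range N, F t
  · right
    obtain ⟨N, rfl⟩ : ∃ N', N = N' + 1 :=
      Nat.exists_eq_succ_of_ne_zero (by rintro rfl; simp at hsome)
    rw [← partialSups_eq_biUnion_range, ← biUnion_range_succ_disjointed] at hsome
    simp only [Set.mem_iUnion, Finset.mem_range, exists_prop] at hsome ⊢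
    obtain ⟨t, htN, ht⟩ := hsome
    have hspoiled : ∃ j < m, ω ∈ E t j := by
      by_contra! hclean
      exact hω ⟨t, htN, disjointed_subset F t ht, hclean⟩
    obtain ⟨j, hj, hE⟩ := hspoiled
    exact ⟨t, htN, j, hj, ht, hE⟩
  · exact Or.inl hsome

/- Only the first success is used: the events that the first success is at `t` are disjoint, so the
spoiling probabilities are averaged rather than summed over `t`. -/
lemma measureReal_not_exists_unspoiled_le {E : ℕ → ℕ → Set Ω} {r : ℕ → ℝ}
    (hF : ∀ t, MeasurableSet[ℱ (t + 1)] (F t))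
    (hp : ∀ t H, MeasurableSet[ℱ t] H → μ.real H * p ≤ μ.real (H ∩ F t))
    (hE : ∀ t j H, MeasurableSet[ℱ (t + 1)] H → μ.real (H ∩ E t j) ≤ μ.real H * r j) (N m : ℕ) :
    μ.real {ω | ¬ ∃ t < N, ω ∈ F t ∧ ∀ j < m, ω ∉ E t j} ≤
      exp (-(N * p)) + ∑ j ∈ Finset.range m, r j := by
  have hfirst : ∀ t, MeasurableSet[ℱ (t + 1)] (disjointed F t) := fun t => by
    rw [disjointed_apply, Finset.sup_set_eq_biUnion, Nat.Iio_eq_range]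
    exact (hF t).diff (ℱ.mono t.le_succ _ (measurableSet_biUnion_range_of_filtration hF t))
  have hr : 0 ≤ ∑ j ∈ Finset.range m, r j := Finset.sum_nonneg fun j _ => by
    simpa using measureReal_nonneg.trans (hE 0 j Set.univ MeasurableSet.univ)
  have hsum : ∑ t ∈ Finset.range N, μ.real (disjointed F t) ≤ 1 := by
    simpa using sum_measureReal_le_measureReal_univ (μ := μ)
      (fun t _ => ℱ.le _ _ (hfirst t)) ((disjoint_disjointed F).set_pairwise (Finset.range N))
  calc μ.real {ω | ¬ ∃ t < N, ω ∈ F t ∧ ∀ j < m, ω ∉ E t j}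
      ≤ μ.real (⋃ t ∈ Finset.range N, F t)ᶜ + ∑ t ∈ Finset.range N, ∑ j ∈ Finset.range m,
          μ.real (disjointed F t ∩ E t j) := by
        refine (measureReal_mono (not_exists_unspoiled_subset F E N m)).trans
          ((measureReal_union_le _ _).trans ?_)
        gcongr
        refine (measureReal_biUnion_finset_le _ _).trans ?_
        gcongr
        exact measureReal_biUnion_finset_le _ _
    _ ≤ exp (-(N * p)) + ∑ t ∈ Finset.range N, ∑ j ∈ Finset.range m,
          μ.real (disjointed F t) * r j := by
        gcongr with t _ j _
        · exact measureReal_compl_biUnion_range_le_exp hF hp N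
        · exact hE t j _ (hfirst t)
    _ = exp (-(N * p)) + (∑ t ∈ Finset.range N, μ.real (disjointed F t)) *
          ∑ j ∈ Finset.range m, r j := by rw [Finset.sum_mul_sum]
    _ ≤ exp (-(N * p)) + ∑ j ∈ Finset.range m, r j := by
        gcongr
        exact mul_le_of_le_one_left hr hsum

end Trials

section Gaussian

open scoped NNReal

variable {v : ℝ≥0}

lemma le_gaussianReal_real_Ici (hv : v ≠ 0) {a : ℝ} (ha : 0 ≤ a) :
    (√(2 * π * v))⁻¹ * exp (-(a + 1) ^ 2 / (2 * v)) ≤ (gaussianReal 0 v).real (Set.Ici a) := by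
  refine le_trans ?_ (measureReal_mono (s₁ := Set.Icc a (a + 1)) Set.Icc_subset_Ici_self)
  rw [measureReal_def, gaussianReal_apply_eq_integral 0 hv,
    ENNReal.toReal_ofReal (integral_nonneg fun x => gaussianPDFReal_nonneg _ _ _)]
  calc (√(2 * π * v))⁻¹ * exp (-(a + 1) ^ 2 / (2 * v))
      = ∫ _ in Set.Icc a (a + 1), (√(2 * π * v))⁻¹ * exp (-(a + 1) ^ 2 / (2 * v)) := by simp
    _ ≤ ∫ x in Set.Icc a (a + 1), gaussianPDFReal 0 v x := by
      refine setIntegral_mono_on continuousOn_const.integrableOn_Icc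
        (integrable_gaussianPDFReal 0 v).integrableOn measurableSet_Icc fun x hx => ?_
      rw [gaussianPDFReal, sub_zero]
      gcongr
      · exact ha.trans hx.1
      · exact hx.2

lemma gaussianReal_real_le_abs_sub (m : ℝ) (v : ℝ≥0) {h : ℝ} (hh : 0 < h) :
    (gaussianReal m v).real {x | h ≤ |x - m|} ≤ v / h ^ 2 := by
  have hcheb := meas_ge_le_variance_div_sq (memLp_id_gaussianReal (μ := m) (v := v) 2) hh
  simp only [variance_id_gaussianReal, id_eq, integral_id_gaussianReal] at hcheb
  exact ENNReal.toReal_le_of_le_ofReal (by positivity) hcheb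

lemma gaussianReal_real_Iic_neg (v : ℝ≥0) (a : ℝ) :
    (gaussianReal 0 v).real (Set.Iic (-a)) = (gaussianReal 0 v).real (Set.Ici a) := by
  have hneg : (gaussianReal 0 v).map (fun x => -x) = gaussianReal 0 v := by
    rw [gaussianReal_map_neg, neg_zero]
  conv_lhs => rw [← hneg, map_measureReal_apply measurable_neg measurableSet_Iic]
  congr 1
  ext x
  simp

end Gaussian

/-- `z` exceeds `a` in the direction of `u`, where `u = 0` counts as pointing upwards: the two
numbers then cannot cancel each other. -/
def IsAlignedExceedance (a u z : ℝ) : Prop := (0 ≤ u ∧ a ≤ z) ∨ (u < 0 ∧ z ≤ -a)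

/-- The sequence `Z` is standard Gaussian noise for the filtration `ℱ`: `Z t` is independent of
`ℱ t` and is revealed at time `t + 1`. -/
structure IsGaussianNoise {Ω : Type*} {mΩ : MeasurableSpace Ω} (μ : Measure Ω)
    (ℱ : Filtration ℕ mΩ) (Z : ℕ → Ω → ℝ) : Prop where
  measurable_succ : ∀ t, Measurable[ℱ (t + 1)] (Z t)
  map_eq : ∀ t, μ.map (Z t) = gaussianReal 0 1
  indep : ∀ t, Indep (MeasurableSpace.comap (Z t) inferInstance) (ℱ t) μ

namespace IsGaussianNoise

variable {Ω : Type*} {mΩ : MeasurableSpace Ω} {μ : Measure Ω}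
  {ℱ : Filtration ℕ mΩ} {Z : ℕ → Ω → ℝ} {t : ℕ} {H : Set Ω}

lemma measurable (hZ : IsGaussianNoise μ ℱ Z) (t : ℕ) : Measurable (Z t) :=
  (hZ.measurable_succ t).mono (ℱ.le _) le_rfl

lemma measureReal_inter_preimage (hZ : IsGaussianNoise μ ℱ Z) (hH : MeasurableSet[ℱ t] H)
    {S : Set ℝ} (hS : MeasurableSet S) :
    μ.real (H ∩ Z t ⁻¹' S) = μ.real H * (gaussianReal 0 1).real S := by
  have hprod := (Indep_iff _ _ μ).1 (hZ.indep t) (Z t ⁻¹' S) H ⟨S, hS, rfl⟩ hH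
  rw [Set.inter_comm, measureReal_def, hprod, ENNReal.toReal_mul, mul_comm, ← hZ.map_eq t,
    map_measureReal_apply (hZ.measurable t) hS]
  rfl

lemma measureReal_inter_isAlignedExceedance [IsFiniteMeasure μ] (hZ : IsGaussianNoise μ ℱ Z)
    (hH : MeasurableSet[ℱ t] H) {u : Ω → ℝ} (hu : Measurable[ℱ t] u) (a : ℝ) :
    μ.real (H ∩ {ω | IsAlignedExceedance a (u ω) (Z t ω)}) =
      μ.real H * (gaussianReal 0 1).real (Set.Ici a) := by
  set P := {ω | 0 ≤ u ω}
  have hP : MeasurableSet[ℱ t] P := hu measurableSet_Ici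
  have hpos : H ∩ {ω | IsAlignedExceedance a (u ω) (Z t ω)} ∩ P =
      (H ∩ P) ∩ Z t ⁻¹' Set.Ici a := by
    ext ω
    simp only [IsAlignedExceedance, P, Set.mem_inter_iff, Set.mem_ofPred_eq, Set.mem_preimage,
      Set.mem_Ici, ← not_le]
    tauto
  have hneg : (H ∩ {ω | IsAlignedExceedance a (u ω) (Z t ω)}) \ P =
      (H \ P) ∩ Z t ⁻¹' Set.Iic (-a) := by
    ext ω
    simp only [IsAlignedExceedance, P, Set.mem_inter_iff, Set.mem_sdiff, Set.mem_ofPred_eq,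
      Set.mem_preimage, Set.mem_Iic, ← not_lt (a := u ω)]
    tauto
  rw [← measureReal_inter_add_sdiff (ℱ.le t _ hP), hpos, hneg,
    hZ.measureReal_inter_preimage (hH.inter hP) measurableSet_Ici,
    hZ.measureReal_inter_preimage (hH.diff hP) measurableSet_Iic, gaussianReal_real_Iic_neg,
    ← add_mul, measureReal_inter_add_sdiff (ℱ.le t _ hP)]

lemma measurableSet_isAlignedExceedance (hZ : IsGaussianNoise μ ℱ Z) {u : Ω → ℝ}
    (hu : Measurable[ℱ t] u) (a : ℝ) :
    MeasurableSet[ℱ (t + 1)] {ω | IsAlignedExceedance a (u ω) (Z t ω)} := by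
  have hu' : Measurable[ℱ (t + 1)] u := hu.mono (ℱ.mono t.le_succ) le_rfl
  exact ((hu' measurableSet_Ici).inter (hZ.measurable_succ t measurableSet_Ici)).union
    ((hu' measurableSet_Iio).inter (hZ.measurable_succ t measurableSet_Iic))

lemma measureReal_not_exists_isAlignedExceedance_le [IsProbabilityMeasure μ]
    (hZ : IsGaussianNoise μ ℱ Z) {X : ℕ → Ω → ℝ} (hX : Adapted ℱ X) (a : ℝ) {h : ℕ → ℝ}
    (hh : ∀ j, 0 < h j) (N m : ℕ) :
    μ.real {ω | ¬ ∃ t < N, IsAlignedExceedance a (X t ω) (Z t ω) ∧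
        ∀ j < m, |Z (t + j + 1) ω| < h j} ≤
      exp (-(N * (gaussianReal 0 1).real (Set.Ici a))) + ∑ j ∈ Finset.range m, 1 / h j ^ 2 := by
  have hspoiled : ∀ t j H, MeasurableSet[ℱ (t + 1)] H →
      μ.real (H ∩ Z (t + j + 1) ⁻¹' {x | h j ≤ |x|}) ≤ μ.real H * (1 / h j ^ 2) := by
    intro t j H hH
    rw [hZ.measureReal_inter_preimage (ℱ.mono (show t + 1 ≤ t + j + 1 by omega) _ hH)
      (measurableSet_le measurable_const measurable_abs)]
    gcongr
    simpa using gaussianReal_real_le_abs_sub 0 1 (hh j)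
  have := measureReal_not_exists_unspoiled_le
    (fun t => hZ.measurableSet_isAlignedExceedance (hX t) a)
    (fun t H hH => (hZ.measureReal_inter_isAlignedExceedance hH (hX t) a).ge) hspoiled N m
  simpa using this

end IsGaussianNoise

section Growth

variable {d m : ℕ} {s δ g x : ℝ}

lemma one_add_mul_le_mul_pow_succ (hd : d ≠ 0) (hs : 0 ≤ s) (hx : 0 < x) (hgx : g * x ^ d = 1)
    {w : ℝ} (hw : (1 + s) * x ≤ w) : (1 + s) * w ≤ g * w ^ (d + 1) := by
  have hg : 0 < g := pos_of_mul_pos_left (hgx ▸ one_pos) (by positivity)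
  have hw0 : 0 ≤ w := le_trans (by positivity) hw
  have hslope : 1 + s ≤ g * w ^ d := by
    calc 1 + s ≤ (1 + s) ^ d := le_self_pow₀ (by linarith) hd
      _ = g * ((1 + s) * x) ^ d := by rw [mul_pow, mul_left_comm, hgx, mul_one]
      _ ≤ g * w ^ d := by gcongr
  calc (1 + s) * w ≤ g * w ^ d * w := by gcongr
    _ = g * w ^ (d + 1) := by ring

lemma one_sub_mul_le_of_sub_noise_le (hs1 : s ≤ 1) (hδ0 : 0 ≤ δ) (hδ : δ ≤ s / 100)
    {w w' y h : ℝ} (hw : 1 ≤ w) (hwy : w ≤ y) (hh : h ≤ s / 8 * w)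
    (hw' : (1 - δ) * y - δ - (1 + δ) * h ≤ w') : (1 - s / 4) * y ≤ w' := by
  have hs : 0 ≤ s := by linarith
  have hy : 0 ≤ y := by linarith
  have hscale : δ * y ≤ s / 100 * y := by gcongr
  have hshift : δ ≤ δ * y := le_mul_of_one_le_right hδ0 (hw.trans hwy)
  have hnoise : (1 + δ) * h ≤ (1 + 1 / 100) * (s / 8 * y) := by
    calc (1 + δ) * h ≤ (1 + δ) * (s / 8 * y) := by gcongr; exact hh.trans (by gcongr)
      _ ≤ (1 + 1 / 100) * (s / 8 * y) := by gcongr; linarith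
  nlinarith

lemma one_add_pow_mul_le_of_noise_le (hd : d ≠ 0) (hs1 : s ≤ 1) (hδ0 : 0 ≤ δ)
    (hδ : δ ≤ s / 100) (hx : 0 < x) (hgx : g * x ^ d = 1) {W h : ℕ → ℝ} (hW1 : 1 ≤ W 0)
    (hWx : (1 + s) * x ≤ W 0) (hh : ∀ j < m, h j ≤ s / 8 * ((1 + s / 4) ^ j * W 0))
    (hW : ∀ j < m, (1 - δ) * (g * W j ^ (d + 1)) - δ - (1 + δ) * h j ≤ W (j + 1)) :
    ∀ j ≤ m, (1 + s / 4) ^ j * W 0 ≤ W j := by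
  intro j hj
  have hs : 0 ≤ s := by linarith
  induction j with
  | zero => simp
  | succ j ih =>
    have hgeom := ih (by omega)
    have hW0 : W 0 ≤ W j :=
      (le_mul_of_one_le_left (by linarith) (one_le_pow₀ (by linarith))).trans hgeom
    have hWj : 0 ≤ W j := by linarith
    have hescape : (1 + s) * W j ≤ g * W j ^ (d + 1) :=
      one_add_mul_le_mul_pow_succ hd hs hx hgx (hWx.trans hW0)
    have hgain : 1 + s / 4 ≤ (1 - s / 4) * (1 + s) := by nlinarith
    calc (1 + s / 4) ^ (j + 1) * W 0 = (1 + s / 4) * ((1 + s / 4) ^ j * W 0) := by ring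
      _ ≤ (1 + s / 4) * W j := by gcongr
      _ ≤ (1 - s / 4) * (1 + s) * W j := by gcongr
      _ = (1 - s / 4) * ((1 + s) * W j) := mul_assoc _ _ _
      _ ≤ (1 - s / 4) * (g * W j ^ (d + 1)) := by gcongr; linarith
      _ ≤ W (j + 1) := one_sub_mul_le_of_sub_noise_le hs1 hδ0 hδ (hW1.trans hW0)
          (by nlinarith) ((hh j hj).trans (by gcongr)) (hW j hj)

lemma mul_pow_pow_le_of_mul_pow_le (hd : d ≠ 0) {θ : ℝ} (hθ0 : 0 < θ) (hθ1 : θ ≤ 1) {y : ℕ → ℝ}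
    (hy0 : 0 ≤ y 0) (hy : ∀ j < m, θ * y j ^ (d + 1) ≤ y (j + 1)) :
    (θ * y 0) ^ ((d + 1) ^ m) ≤ θ * y m := by
  induction m with
  | zero => simp
  | succ m ih =>
    have hprev := ih fun j hj => hy j (by omega)
    have hym : 0 ≤ y m := nonneg_of_mul_nonneg_right (le_trans (by positivity) hprev) hθ0
    calc (θ * y 0) ^ ((d + 1) ^ (m + 1)) = ((θ * y 0) ^ ((d + 1) ^ m)) ^ (d + 1) := by
          rw [← pow_mul, pow_succ]
      _ ≤ (θ * y m) ^ (d + 1) := by gcongr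
      _ = θ ^ d * (θ * y m ^ (d + 1)) := by ring
      _ ≤ θ * (θ * y m ^ (d + 1)) := by gcongr; exact pow_le_of_le_one hθ0.le hθ1 hd
      _ ≤ θ * y (m + 1) := by gcongr; exact hy m m.lt_succ_self

lemma mul_pow_pow_le_of_noise_le (hd : d ≠ 0) (hs1 : s ≤ 1) (hδ0 : 0 ≤ δ)
    (hδ : δ ≤ s / 100) (hx : 0 < x) (hgx : g * x ^ d = 1) {W h : ℕ → ℝ} (hW1 : 1 ≤ W 0)
    (hWx : (1 + s) * x ≤ W 0) (hh : ∀ j < m, h j ≤ s / 8 * ((1 + s / 4) ^ j * W 0))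
    (hW : ∀ j < m, (1 - δ) * (g * W j ^ (d + 1)) - δ - (1 + δ) * h j ≤ W (j + 1)) :
    x * ((1 - s / 4) * (W 0 / x)) ^ ((d + 1) ^ m) ≤ (1 - δ) * (g * W m ^ (d + 1)) := by
  have hs : 0 ≤ s := by linarith
  have hgeom := one_add_pow_mul_le_of_noise_le hd hs1 hδ0 hδ hx hgx hW1 hWx hh hW
  have hW0 : ∀ j ≤ m, W 0 ≤ W j := fun j hj =>
    (le_mul_of_one_le_left (by linarith) (one_le_pow₀ (by linarith))).trans (hgeom j hj)
  have hescape : ∀ j ≤ m, (1 + s) * W j ≤ g * W j ^ (d + 1) := fun j hj =>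
    one_add_mul_le_mul_pow_succ hd hs hx hgx (hWx.trans (hW0 j hj))
  have hrescaled : ∀ j < m, (1 - s / 4) * (W j / x) ^ (d + 1) ≤ W (j + 1) / x := by
    intro j hj
    have hWj := hW0 j hj.le
    have hstep : (1 - s / 4) * (g * W j ^ (d + 1)) ≤ W (j + 1) :=
      one_sub_mul_le_of_sub_noise_le hs1 hδ0 hδ (hW1.trans hWj)
        (by nlinarith [hescape j hj.le]) ((hh j hj).trans (by gcongr; exact hgeom j hj.le))
        (hW j hj)
    calc (1 - s / 4) * (W j / x) ^ (d + 1)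
        = (1 - s / 4) * (g * x ^ d * W j ^ (d + 1)) / x ^ (d + 1) := by rw [hgx, div_pow]; ring
      _ = (1 - s / 4) * (g * W j ^ (d + 1)) / x := by rw [pow_succ x]; field_simp
      _ ≤ W (j + 1) / x := by gcongr
  have hWm : 0 ≤ W m := by linarith [hW0 m le_rfl]
  have hgain : 1 ≤ (1 - δ) * (1 + s) := by nlinarith
  calc x * ((1 - s / 4) * (W 0 / x)) ^ ((d + 1) ^ m)
      ≤ x * ((1 - s / 4) * (W m / x)) := by
        gcongr
        exact mul_pow_pow_le_of_mul_pow_le (y := fun j => W j / x) hd (by linarith)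
          (by linarith) (by positivity) hrescaled
    _ = (1 - s / 4) * W m := by field_simp
    _ ≤ (1 - δ) * (1 + s) * W m := by gcongr; linarith
    _ = (1 - δ) * ((1 + s) * W m) := mul_assoc _ _ _
    _ ≤ (1 - δ) * (g * W m ^ (d + 1)) :=
        mul_le_mul_of_nonneg_left (hescape m le_rfl) (by linarith)

end Growth

section Perturbation

variable {δ u b c z : ℝ}

lemma one_sub_mul_le_abs_mul_pow {g ζ : ℝ} (hg : 0 ≤ g) (hζ : |ζ - 1| ≤ δ) (y : ℝ) (p : ℕ) :
    (1 - δ) * (g * |y| ^ p) ≤ |g * ζ * y ^ p| := by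
  have hζ' : 1 - δ ≤ |ζ| := by linarith [(abs_le.1 hζ).1, le_abs_self ζ]
  calc (1 - δ) * (g * |y| ^ p) ≤ |ζ| * (g * |y| ^ p) := by gcongr
    _ = |g * ζ * y ^ p| := by rw [abs_mul, abs_mul, abs_of_nonneg hg, abs_pow]; ring

lemma abs_sub_le_abs_add_mul {h : ℝ} (hb : |b| ≤ δ) (hc : |c - 1| ≤ δ) (hz : |z| ≤ h) :
    |u| - δ - (1 + δ) * h ≤ |u + b + c * z| := by
  have hc' : |c| ≤ 1 + δ := by linarith [abs_sub_abs_le_abs_sub c 1, abs_one (α := ℝ)]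
  have hcz : |c * z| ≤ (1 + δ) * h := by
    rw [abs_mul]
    exact mul_le_mul hc' hz (abs_nonneg z) ((abs_nonneg c).trans hc')
  have htriangle : |u| ≤ |u + b + c * z| + |b| + |c * z| := by
    calc |u| = |u + b + c * z - b - c * z| := by ring_nf
      _ ≤ |u + b + c * z - b| + |c * z| := abs_sub _ _
      _ ≤ |u + b + c * z| + |b| + |c * z| := by gcongr; exact abs_sub _ _
  linarith

lemma IsAlignedExceedance.le_abs_add_mul {a : ℝ} (h : IsAlignedExceedance a u z) (ha : 0 ≤ a)
    (hδ : δ ≤ 1) (hb : |b| ≤ δ) (hc : |c - 1| ≤ δ) :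
    (1 - δ) * a - δ ≤ |u + b + c * z| := by
  have hc' : 1 - δ ≤ c := by linarith [(abs_le.1 hc).1]
  have hc0 : 0 ≤ c := by linarith
  obtain ⟨hb₁, hb₂⟩ := abs_le.1 hb
  rcases h with ⟨hu, hz⟩ | ⟨hu, hz⟩
  · have : (1 - δ) * a ≤ c * z := by gcongr
    exact le_trans (by linarith) (le_abs_self _)
  · have : (1 - δ) * a ≤ c * -z := by gcongr; linarith
    exact le_trans (by linarith) (neg_le_abs _)

end Perturbation

/-- The size `(1 + s) * x + M` that the perturbed input must reach for the process to run away: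
a factor beyond the threshold `x`, plus a margin `M` that absorbs the subsequent noise. -/
def launchHeight (s x M : ℝ) : ℝ := (1 + s) * x + M

/-- The size of the noise tolerated `j + 1` steps after a launch with margin `M`. It grows
geometrically, more slowly than the launched process. -/
noncomputable def noiseAllowance (s M : ℝ) (j : ℕ) : ℝ := s / 8 * ((1 + s / 4) ^ j * M)

/-- A size guaranteed `m + 1` steps after a launch with margin `M`: in units of the threshold `x`,
the launch height, less a factor `1 - s / 4`, is raised to the power `d + 1` at each step. -/
noncomputable def runawayHeight (d : ℕ) (s x M : ℝ) (m : ℕ) : ℝ :=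
  x * ((1 - s / 4) * (launchHeight s x M / x)) ^ ((d + 1) ^ m)

lemma runawayHeight_le_abs_of_isAlignedExceedance {d m : ℕ} (hd : d ≠ 0) {s δ M g x : ℝ}
    (hs1 : s ≤ 1) (hδ : δ ≤ s / 100) (hM : 1 ≤ M) (hx : 0 < x) (hgx : g * x ^ d = 1)
    {X ζ b c Z : ℕ → ℝ} (hX : ∀ t, X (t + 1) = g * ζ t * (X t + b t + c t * Z t) ^ (d + 1))
    (hpert : ∀ t, |ζ t - 1| ≤ δ ∧ |b t| ≤ δ ∧ |c t - 1| ≤ δ) {t : ℕ}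
    (hlaunch : IsAlignedExceedance ((1 + s) * launchHeight s x M) (X t) (Z t))
    (hnoise : ∀ j < m, |Z (t + j + 1)| ≤ noiseAllowance s M j) :
    runawayHeight d s x M m ≤ |X (t + m + 1)| := by
  have hδ0 : 0 ≤ δ := (abs_nonneg _).trans (hpert 0).1
  have hs : 0 ≤ s := by linarith
  have hg : 0 < g := pos_of_mul_pos_left (hgx ▸ one_pos) (by positivity)
  set A := launchHeight s x M with hA
  have hxA : (1 + s) * x ≤ A := by rw [hA, launchHeight]; linarith
  have hMA : M ≤ A := by rw [hA, launchHeight]; linarith [show 0 ≤ (1 + s) * x by positivity]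
  set W : ℕ → ℝ := fun j => |X (t + j) + b (t + j) + c (t + j) * Z (t + j)|
  have hXW : ∀ j, (1 - δ) * (g * W j ^ (d + 1)) ≤ |X (t + j + 1)| := fun j => by
    rw [hX]
    exact one_sub_mul_le_abs_mul_pow hg.le (hpert (t + j)).1 _ _
  have hAW : A ≤ W 0 := by
    have hstart : (1 - δ) * ((1 + s) * A) - δ ≤ W 0 :=
      hlaunch.le_abs_add_mul (by nlinarith) (by linarith) (hpert t).2.1 (hpert t).2.2
    have hgain : (1 - δ) * (1 + s) ≥ 1 + δ := by nlinarith
    nlinarith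
  have hstep : ∀ j < m,
      (1 - δ) * (g * W j ^ (d + 1)) - δ - (1 + δ) * noiseAllowance s M j ≤ W (j + 1) :=
    fun j hj => le_trans (by gcongr; exact hXW j)
      (abs_sub_le_abs_add_mul (hpert (t + j + 1)).2.1 (hpert (t + j + 1)).2.2 (hnoise j hj))
  calc runawayHeight d s x M m = x * ((1 - s / 4) * (A / x)) ^ ((d + 1) ^ m) := rfl
    _ ≤ x * ((1 - s / 4) * (W 0 / x)) ^ ((d + 1) ^ m) := by
        have : 0 ≤ A := by linarith
        have : 0 ≤ 1 - s / 4 := by linarith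
        gcongr
    _ ≤ (1 - δ) * (g * W m ^ (d + 1)) :=
        mul_pow_pow_le_of_noise_le hd hs1 hδ0 hδ hx hgx (by linarith) (hxA.trans hAW)
          (fun j _ => by unfold noiseAllowance; gcongr; linarith) hstep
    _ ≤ |X (t + m + 1)| := hXW m

/-- The threshold `g ^ (-1 / d)`, which is the positive fixed point of `w ↦ g * w ^ (d + 1)`:
beyond it the unperturbed recursion runs away. -/
noncomputable def escapeThreshold (d : ℕ) (g : ℝ) : ℝ := g⁻¹ ^ (d : ℝ)⁻¹

section EscapeThreshold

variable {d : ℕ} {s g : ℝ}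

lemma escapeThreshold_pos (hg : 0 < g) : 0 < escapeThreshold d g :=
  rpow_pos_of_pos (inv_pos.2 hg) _

lemma mul_escapeThreshold_pow (hd : d ≠ 0) (hg : 0 < g) : g * escapeThreshold d g ^ d = 1 := by
  rw [escapeThreshold, rpow_inv_natCast_pow (inv_pos.2 hg).le hd, mul_inv_cancel₀ hg.ne']

lemma escapeThreshold_sq (hg : 0 ≤ g) : escapeThreshold d g ^ 2 = (1 / g) ^ (2 / (d : ℝ)) := by
  rw [escapeThreshold, ← rpow_mul_natCast (inv_nonneg.2 hg), one_div, Nat.cast_ofNat,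
    inv_mul_eq_div]

lemma inv_le_escapeThreshold (hd : d ≠ 0) (hg : 0 < g) {r : ℝ} (hr : 1 ≤ r) (hgr : g ≤ r) :
    r⁻¹ ≤ escapeThreshold d g := by
  have hd1 : (1 : ℝ) ≤ d := by exact_mod_cast Nat.one_le_iff_ne_zero.2 hd
  calc r⁻¹ ≤ r⁻¹ ^ (d : ℝ)⁻¹ :=
        self_le_rpow_of_le_one (by positivity) (inv_le_one_of_one_le₀ hr)
          (inv_le_one_of_one_le₀ hd1)
    _ ≤ escapeThreshold d g := by unfold escapeThreshold; gcongr

lemma log_escapeThreshold (hg : 0 < g) : log (escapeThreshold d g) = -(log g / d) := by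
  rw [escapeThreshold, log_rpow (inv_pos.2 hg), log_inv]
  ring

/- For bounded `g` the factor `1 + s` beyond the threshold suffices; for large `g` the threshold
itself is small, and the margin `M` is larger than it by a power of `g`. -/
lemma exists_exp_mul_max_logb_le_launchHeight_div (hd : d ≠ 0) (hs : 0 < s) (hs1 : s ≤ 1) :
    ∃ κ > 0, ∀ g > 0, ∀ M ≥ 2, exp (κ * max (logb (d + 1) g) 1) ≤
      (1 - s / 4) * (launchHeight s (escapeThreshold d g) M / escapeThreshold d g) := by
  have hd0 : (0 : ℝ) < d := by positivity
  have hlog : 0 < log (d + 1 : ℝ) := log_pos (by linarith)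
  refine ⟨min (log (1 + s / 2)) (log (d + 1) / d),
    lt_min (log_pos (by linarith)) (by positivity), fun g hg M hM => ?_⟩
  set κ := min (log (1 + s / 2)) (log (d + 1 : ℝ) / d)
  set x := escapeThreshold d g
  have hx : 0 < x := escapeThreshold_pos hg
  rcases le_total (logb (d + 1) g) 1 with hsmall | hlarge
  · calc exp (κ * max (logb (d + 1) g) 1) = exp κ := by rw [max_eq_right hsmall, mul_one]
      _ ≤ exp (log (1 + s / 2)) := exp_le_exp.2 (min_le_left _ _)
      _ = 1 + s / 2 := exp_log (by linarith)
      _ ≤ (1 - s / 4) * (1 + s) := by nlinarith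
      _ = (1 - s / 4) * ((1 + s) * x / x) := by rw [mul_div_cancel_right₀ _ hx.ne']
      _ ≤ (1 - s / 4) * (launchHeight s x M / x) := by
          unfold launchHeight
          gcongr <;> linarith
  · have hexponent : κ * logb (d + 1) g ≤ -log x := by
      calc κ * logb (d + 1) g ≤ log (d + 1) / d * logb (d + 1) g := by
            gcongr
            exact min_le_right _ _
        _ = -log x := by
            rw [log_escapeThreshold hg, logb]
            field_simp
    have hlaunch : 2 ≤ launchHeight s x M := by
      have : 0 ≤ (1 + s) * x := by positivity
      rw [launchHeight]
      linarith
    calc exp (κ * max (logb (d + 1) g) 1) = exp (κ * logb (d + 1) g) := by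
          rw [max_eq_left hlarge]
      _ ≤ exp (-log x) := exp_le_exp.2 hexponent
      _ = 1 / x := by rw [exp_neg, exp_log hx, one_div]
      _ ≤ (1 - s / 4) * launchHeight s x M / x := by gcongr; nlinarith
      _ = (1 - s / 4) * (launchHeight s x M / x) := mul_div_assoc _ _ _

end EscapeThreshold

section Budget

variable {s M : ℝ}

lemma noiseAllowance_pos (hs : 0 < s) (hM : 0 < M) (j : ℕ) : 0 < noiseAllowance s M j := by
  unfold noiseAllowance
  positivity

lemma exists_sum_one_div_noiseAllowance_sq_le (hs : 0 < s) :
    ∃ K, ∀ M m, ∑ j ∈ Finset.range m, 1 / noiseAllowance s M j ^ 2 ≤ K / M ^ 2 := by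
  set q := ((1 + s / 4) ^ 2)⁻¹
  have hq0 : 0 ≤ q := by positivity
  have hq1 : q < 1 := inv_lt_one_of_one_lt₀ (one_lt_pow₀ (by linarith) two_ne_zero)
  have hterm : ∀ M j, 1 / noiseAllowance s M j ^ 2 = 64 / s ^ 2 / M ^ 2 * q ^ j := fun M j => by
    rw [noiseAllowance, inv_pow, ← pow_mul, mul_comm 2 j, pow_mul]
    field_simp
    norm_num
  refine ⟨64 / s ^ 2 * (1 - q)⁻¹, fun M m => ?_⟩
  calc ∑ j ∈ Finset.range m, 1 / noiseAllowance s M j ^ 2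
      = 64 / s ^ 2 / M ^ 2 * ∑ j ∈ Finset.range m, q ^ j := by
        rw [Finset.mul_sum]
        exact Finset.sum_congr rfl fun j _ => hterm M j
    _ ≤ 64 / s ^ 2 / M ^ 2 * (1 - q)⁻¹ := by
        gcongr
        rw [← tsum_geometric_of_lt_one hq0 hq1]
        exact (summable_geometric_of_lt_one hq0 hq1).sum_le_tsum _ fun _ _ => by positivity
    _ = 64 / s ^ 2 * (1 - q)⁻¹ / M ^ 2 := by ring

lemma div_gaussianReal_real_Ici_add_one_le {a : ℝ} (ha : 0 ≤ a) (hM : 1 ≤ M) :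
    M / (gaussianReal 0 1).real (Set.Ici a) + 1 ≤ exp ((a + 1) ^ 2 / 2 + 4 * M) := by
  have htail := le_gaussianReal_real_Ici one_ne_zero ha
  have hpi : √(2 * π) ≤ 3 := by
    rw [sqrt_le_left (by norm_num)]
    linarith [pi_lt_d2]
  have hexp : 1 ≤ exp ((a + 1) ^ 2 / 2) := one_le_exp (by positivity)
  calc M / (gaussianReal 0 1).real (Set.Ici a) + 1
      ≤ M / ((√(2 * π))⁻¹ * exp (-(a + 1) ^ 2 / 2)) + 1 := by
        gcongr
        simpa using htail
    _ = √(2 * π) * exp ((a + 1) ^ 2 / 2) * M + 1 := by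
        rw [neg_div, exp_neg]
        field_simp
    _ ≤ 3 * exp ((a + 1) ^ 2 / 2) * M + exp ((a + 1) ^ 2 / 2) * M := by
        gcongr
        nlinarith
    _ = exp ((a + 1) ^ 2 / 2) * (4 * M) := by ring
    _ ≤ exp ((a + 1) ^ 2 / 2) * exp (4 * M) := by
        gcongr
        linarith [add_one_le_exp (4 * M)]
    _ = exp ((a + 1) ^ 2 / 2 + 4 * M) := (exp_add _ _).symm

lemma exp_add_le_exp_add_exp (hs : 0 < s) (y w : ℝ) :
    exp (y + w) ≤ exp ((1 + s) * y) + exp ((1 + s⁻¹) * w) := by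
  rcases le_total w (s * y) with h | h
  · exact (exp_le_exp.2 (by linarith)).trans (le_add_of_nonneg_right (exp_pos _).le)
  · have hy : y ≤ s⁻¹ * w := by rwa [le_inv_mul_iff₀ hs]
    exact (exp_le_exp.2 (by linarith)).trans (le_add_of_nonneg_left (exp_pos _).le)

lemma mul_launchHeight_add_one_sq_le (hs : 0 < s) (hs1 : s ≤ 1) {x : ℝ} (hx : 0 ≤ x)
    (hM : 1 ≤ M) :
    ((1 + s) * launchHeight s x M + 1) ^ 2 ≤ (1 + s) ^ 5 * x ^ 2 + (1 + s⁻¹) * (3 * M) ^ 2 := by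
  set P := (1 + s) ^ 2 * x
  have hlaunch : 0 ≤ launchHeight s x M := by unfold launchHeight; positivity
  have hsum : (1 + s) * launchHeight s x M + 1 ≤ P + 3 * M := by
    unfold launchHeight P
    nlinarith
  calc ((1 + s) * launchHeight s x M + 1) ^ 2 ≤ (P + 3 * M) ^ 2 := by gcongr
    _ = P ^ 2 + 2 * P * (3 * M) + (3 * M) ^ 2 := by ring
    _ ≤ P ^ 2 + (s * P ^ 2 + s⁻¹ * (3 * M) ^ 2) + (3 * M) ^ 2 := by
        gcongr
        exact two_mul_le_add_mul_sq hs
    _ = (1 + s) ^ 5 * x ^ 2 + (1 + s⁻¹) * (3 * M) ^ 2 := by ring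

lemma exists_div_gaussianReal_real_launchHeight_add_one_le (hs : 0 < s) (hs1 : s ≤ 1) :
    ∃ K, ∀ x ≥ 0, ∀ M ≥ 1,
      M / (gaussianReal 0 1).real (Set.Ici ((1 + s) * launchHeight s x M)) + 1 ≤
        exp ((1 + s) ^ 6 / 2 * x ^ 2) + exp (K * M ^ 2) := by
  refine ⟨(1 + s⁻¹) * ((1 + s⁻¹) * (9 / 2) + 4), fun x hx M hM => ?_⟩
  have hlaunch : 0 ≤ (1 + s) * launchHeight s x M := by unfold launchHeight; positivity
  have hexponent : ((1 + s) * launchHeight s x M + 1) ^ 2 / 2 + 4 * M ≤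
      (1 + s) ^ 5 / 2 * x ^ 2 + ((1 + s⁻¹) * (9 / 2) + 4) * M ^ 2 := by
    nlinarith [mul_launchHeight_add_one_sq_le hs hs1 hx hM]
  calc M / (gaussianReal 0 1).real (Set.Ici ((1 + s) * launchHeight s x M)) + 1
      ≤ exp ((1 + s) ^ 5 / 2 * x ^ 2 + ((1 + s⁻¹) * (9 / 2) + 4) * M ^ 2) :=
        (div_gaussianReal_real_Ici_add_one_le hlaunch hM).trans (exp_le_exp.2 hexponent)
    _ ≤ exp ((1 + s) * ((1 + s) ^ 5 / 2 * x ^ 2)) +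
          exp ((1 + s⁻¹) * (((1 + s⁻¹) * (9 / 2) + 4) * M ^ 2)) := exp_add_le_exp_add_exp hs _ _
    _ = exp ((1 + s) ^ 6 / 2 * x ^ 2) +
          exp ((1 + s⁻¹) * ((1 + s⁻¹) * (9 / 2) + 4) * M ^ 2) := by ring_nf

lemma exists_one_add_pow_le {η : ℝ} (hη : 0 < η) (p : ℕ) :
    ∃ s > 0, s ≤ 1 ∧ (1 + s) ^ p ≤ 1 + η := by
  have hcont : Tendsto (fun s : ℝ => (1 + s) ^ p) (nhdsWithin 0 (Set.Ioi 0)) (nhds 1) := by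
    have : Continuous fun s : ℝ => (1 + s) ^ p := by fun_prop
    exact (this.tendsto' 0 1 (by simp)).mono_left nhdsWithin_le_nhds
  obtain ⟨s, hpow, hs0, hs1⟩ := ((hcont.eventually_le_const (lt_add_of_pos_right 1 hη)).and
    (Ioc_mem_nhdsGT one_pos)).exists
  exact ⟨s, hs0, hs1, hpow⟩

end Budget

section Asymptotics

variable {d : ℕ} {γ : ℕ → ℝ}

lemma logTerm_add_two (d n : ℕ) (g : ℝ) :
    logTerm (d + 2) n g = logb (d + 1) (logb (d + 1) n / max (logb (d + 1) g) 1) := by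
  have hbase : ((d + 2 : ℕ) : ℝ) - 1 = d + 1 := by push_cast; ring
  rw [logTerm, hbase]

lemma rpow_le_pow_of_mul_logb_le {B r a : ℝ} {m : ℕ} (hB : 1 < B) (hr : 0 < r)
    (h : a * logb B r ≤ m) : r ^ a ≤ B ^ m := by
  rw [← rpow_natCast, ← logb_le_iff_le_rpow hB (by positivity), logb_rpow_eq_mul_logb_of_pos hr]
  exact h

lemma tendsto_logb_div_max_logb_one {B : ℝ} (hB : 1 < B) (hγpos : ∀ n, 0 < γ n)
    (hγ : ∀ r : ℝ, 0 < r → ∀ᶠ n : ℕ in atTop, γ n ≤ (n : ℝ) ^ r) :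
    Tendsto (fun n : ℕ => logb B n / max (logb B (γ n)) 1) atTop atTop := by
  have hlogn : Tendsto (fun n : ℕ => logb B n) atTop atTop :=
    (tendsto_logb_atTop hB).comp tendsto_natCast_atTop_atTop
  refine tendsto_atTop.2 fun A => ?_
  obtain ⟨A', hAA', hA'⟩ : ∃ A', A ≤ A' ∧ 0 < A' := ⟨max A 1, le_max_left _ _, by positivity⟩
  filter_upwards [hγ A'⁻¹ (by positivity), hlogn.eventually_ge_atTop A', eventually_ge_atTop 1]
    with n hγn hlarge hn
  have hn0 : (0 : ℝ) < n := by positivity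
  have hlogγ : logb B (γ n) ≤ logb B n / A' := by
    rw [div_eq_inv_mul, ← logb_rpow_eq_mul_logb_of_pos hn0]
    exact logb_le_logb_of_le hB (hγpos n) hγn
  have hone : 1 ≤ logb B n / A' := (one_le_div hA').2 hlarge
  calc A ≤ A' := hAA'
    _ ≤ logb B n / max (logb B (γ n)) 1 :=
        (le_div_comm₀ hA' (by positivity)).2 (max_le hlogγ hone)

lemma tendsto_logTerm_add_two (hd : d ≠ 0) (hγpos : ∀ n, 0 < γ n)
    (hγ : ∀ r : ℝ, 0 < r → ∀ᶠ n : ℕ in atTop, γ n ≤ (n : ℝ) ^ r) :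
    Tendsto (fun n => logTerm (d + 2) n (γ n)) atTop atTop := by
  have hB : (1 : ℝ) < d + 1 := by linarith [show (0 : ℝ) < d by positivity]
  simp_rw [logTerm_add_two]
  exact (tendsto_logb_atTop hB).comp (tendsto_logb_div_max_logb_one hB hγpos hγ)

lemma eventually_rpow_le_exp_pow (hd : d ≠ 0) (hγpos : ∀ n, 0 < γ n)
    (hγ : ∀ r : ℝ, 0 < r → ∀ᶠ n : ℕ in atTop, γ n ≤ (n : ℝ) ^ r) {κ θ : ℝ} (hκ : 0 < κ)
    (hθ : 0 < θ) (A : ℝ) :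
    ∀ᶠ n : ℕ in atTop, ∀ m : ℕ, (1 + θ) * logTerm (d + 2) n (γ n) ≤ m →
      (n : ℝ) ^ A ≤ exp (κ * max (logb (d + 1) (γ n)) 1) ^ ((d + 1) ^ m) := by
  have hB : (1 : ℝ) < d + 1 := by linarith [show (0 : ℝ) < d by positivity]
  have hlogB : 0 < log (d + 1 : ℝ) := log_pos hB
  have hR := tendsto_logb_div_max_logb_one hB hγpos hγ
  filter_upwards [((tendsto_rpow_atTop hθ).comp hR).eventually_ge_atTop (A * log (d + 1) / κ),
    hR.eventually_gt_atTop 0, eventually_ge_atTop 1] with n hRθ hR0 hn m hm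
  rw [logTerm_add_two] at hm
  set G := max (logb (d + 1) (γ n)) 1
  set R := logb (d + 1) n / G with hRdef
  have hG : 0 < G := by positivity
  have hn1 : (1 : ℝ) ≤ n := by exact_mod_cast hn
  have hlogn : κ * G * R * log (d + 1) = κ * log n := by rw [hRdef, logb]; field_simp
  have hexponent : log n * A ≤ ((d + 1) ^ m : ℕ) * (κ * G) := by
    calc log n * A = κ * log n * (A * log (d + 1) / κ) / log (d + 1) := by field_simp
      _ ≤ κ * log n * R ^ θ / log (d + 1) := by
          have := log_nonneg hn1
          gcongr
          exact hRθ
      _ = R ^ (1 + θ) * (κ * G) := by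
          rw [← hlogn, rpow_add hR0, rpow_one]
          field_simp
      _ ≤ ((d + 1) ^ m : ℕ) * (κ * G) := by
          push_cast
          gcongr
          exact rpow_le_pow_of_mul_logb_le hB hR0 hm
  rw [rpow_def_of_pos (by linarith), ← exp_nat_mul]
  exact exp_le_exp.2 hexponent

lemma eventually_rpow_le_runawayHeight (hd : d ≠ 0) (hγpos : ∀ n, 0 < γ n)
    (hγ : ∀ r : ℝ, 0 < r → ∀ᶠ n : ℕ in atTop, γ n ≤ (n : ℝ) ^ r) {s θ : ℝ} (hs : 0 < s)
    (hs1 : s ≤ 1) (hθ : 0 < θ) (ε : ℝ) :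
    ∀ᶠ n : ℕ in atTop, ∀ m : ℕ, (1 + θ) * logTerm (d + 2) n (γ n) ≤ m → ∀ M ≥ 2,
      (n : ℝ) ^ ε ≤ runawayHeight d s (escapeThreshold d (γ n)) M m := by
  obtain ⟨κ, hκ, hbase⟩ := exists_exp_mul_max_logb_le_launchHeight_div hd hs hs1
  filter_upwards [eventually_rpow_le_exp_pow hd hγpos hγ hκ hθ (1 + ε), hγ 1 one_pos,
    eventually_ge_atTop 1] with n hgrowth hγn hn m hm M hM
  have hn1 : (1 : ℝ) ≤ n := by exact_mod_cast hn
  have hn0 : (0 : ℝ) < n := by linarith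
  rw [rpow_one] at hγn
  calc (n : ℝ) ^ ε = (n : ℝ)⁻¹ * (n : ℝ) ^ (1 + ε) := by
        rw [rpow_add hn0, rpow_one, inv_mul_cancel_left₀ hn0.ne']
    _ ≤ escapeThreshold d (γ n) * exp (κ * max (logb (d + 1) (γ n)) 1) ^ ((d + 1) ^ m) := by
        gcongr
        · exact (escapeThreshold_pos (hγpos n)).le
        · exact inv_le_escapeThreshold hd (hγpos n) hn1 hγn
        · exact hgrowth m hm
    _ ≤ runawayHeight d s (escapeThreshold d (γ n)) M m := by
        unfold runawayHeight
        gcongr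
        · exact (escapeThreshold_pos (hγpos n)).le
        · exact hbase _ (hγpos n) M hM

lemma eventually_exists_trials_and_growth_steps (hd : d ≠ 0) (hγpos : ∀ n, 0 < γ n)
    (hγ : ∀ r : ℝ, 0 < r → ∀ᶠ n : ℕ in atTop, γ n ≤ (n : ℝ) ^ r) {s η : ℝ} (hs : 0 < s)
    (hs1 : s ≤ 1) (hη : 0 < η) (hsη : (1 + s) ^ 6 ≤ 1 + η) {M : ℝ} (hM : 2 ≤ M) (ε : ℝ) :
    ∀ᶠ n : ℕ in atTop, ∃ N m : ℕ,
      M ≤ N * (gaussianReal 0 1).real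
        (Set.Ici ((1 + s) * launchHeight s (escapeThreshold d (γ n)) M)) ∧
      ((N + m : ℕ) : ℝ) ≤
        exp ((1 + η) / 2 * escapeThreshold d (γ n) ^ 2) + (1 + η) * logTerm (d + 2) n (γ n) ∧
      (n : ℝ) ^ ε ≤ runawayHeight d s (escapeThreshold d (γ n)) M m := by
  obtain ⟨K, hK⟩ := exists_div_gaussianReal_real_launchHeight_add_one_le hs hs1
  have hlogTerm := tendsto_logTerm_add_two hd hγpos hγ
  filter_upwards [eventually_rpow_le_runawayHeight hd hγpos hγ hs hs1 (half_pos hη) ε,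
    hlogTerm.eventually_ge_atTop 0,
    (hlogTerm.const_mul_atTop (half_pos hη)).eventually_ge_atTop (exp (K * M ^ 2) + 1)]
    with n hlevel hL0 hL
  set L := logTerm (d + 2) n (γ n)
  set x := escapeThreshold d (γ n)
  have hx : 0 < x := escapeThreshold_pos (hγpos n)
  set p := (gaussianReal 0 1).real (Set.Ici ((1 + s) * launchHeight s x M))
  have hp : 0 < p := lt_of_lt_of_le (by positivity)
    (le_gaussianReal_real_Ici one_ne_zero (by unfold launchHeight; positivity))
  refine ⟨⌈M / p⌉₊, ⌈(1 + η / 2) * L⌉₊, ?_, ?_, hlevel _ (Nat.le_ceil _) M hM⟩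
  · exact (div_le_iff₀ hp).1 (Nat.le_ceil _)
  · have hN : (⌈M / p⌉₊ : ℝ) ≤ exp ((1 + s) ^ 6 / 2 * x ^ 2) + exp (K * M ^ 2) :=
      (Nat.ceil_lt_add_one (by positivity)).le.trans (hK x hx.le M (by linarith))
    have hm : (⌈(1 + η / 2) * L⌉₊ : ℝ) ≤ (1 + η / 2) * L + 1 :=
      (Nat.ceil_lt_add_one (by positivity)).le
    have hexp : exp ((1 + s) ^ 6 / 2 * x ^ 2) ≤ exp ((1 + η) / 2 * x ^ 2) := by gcongr
    push_cast
    linarith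

end Asymptotics

/-- `X` is driven by the noise `Z` through `X (t + 1) = g ζ_t (X t + b_t + c_t Z t) ^ p`, where the
perturbations `ζ`, `b`, `c` are almost surely `δ`-close to `1`, `0`, `1`. -/
structure IsPerturbedPowerRecursion {Ω : Type*} {mΩ : MeasurableSpace Ω} (μ : Measure Ω)
    (ℱ : Filtration ℕ mΩ) (p : ℕ) (g δ : ℝ) (X ζ b c Z : ℕ → Ω → ℝ) : Prop where
  adapted : Adapted ℱ X
  noise : IsGaussianNoise μ ℱ Z
  succ_eq : ∀ t ω, X (t + 1) ω = g * ζ t ω * (X t ω + b t ω + c t ω * Z t ω) ^ p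
  perturbation_le : ∀ᵐ ω ∂μ, ∀ t, |ζ t ω - 1| ≤ δ ∧ |b t ω| ≤ δ ∧ |c t ω - 1| ≤ δ

section SingleRecursion

variable {Ω : Type*} {mΩ : MeasurableSpace Ω} {μ : Measure Ω} [IsProbabilityMeasure μ]
  {ℱ : Filtration ℕ mΩ} {X ζ b c Z : ℕ → Ω → ℝ}

lemma IsPerturbedPowerRecursion.measureReal_not_exists_le_abs_le {d N m : ℕ} {g δ s M level : ℝ}
    (hproc : IsPerturbedPowerRecursion μ ℱ (d + 1) g δ X ζ b c Z) (hd : d ≠ 0) (hg : 0 < g)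
    (hs : 0 < s) (hs1 : s ≤ 1) (hδ : δ ≤ s / 100) (hM : 1 ≤ M)
    (hN : M ≤ N * (gaussianReal 0 1).real
      (Set.Ici ((1 + s) * launchHeight s (escapeThreshold d g) M)))
    (hlevel : level ≤ runawayHeight d s (escapeThreshold d g) M m) :
    μ.real {ω | ¬ ∃ t, (1 ≤ t ∧ level ≤ |X t ω|) ∧ t ≤ N + m} ≤
      exp (-M) + ∑ j ∈ Finset.range m, 1 / noiseAllowance s M j ^ 2 := by
  set a := (1 + s) * launchHeight s (escapeThreshold d g) M
  set E := {ω | ¬ ∃ t < N, IsAlignedExceedance a (X t ω) (Z t ω) ∧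
    ∀ j < m, |Z (t + j + 1) ω| < noiseAllowance s M j}
  have hmiss : {ω | ¬ ∃ t, (1 ≤ t ∧ level ≤ |X t ω|) ∧ t ≤ N + m} ≤ᵐ[μ] E := by
    filter_upwards [hproc.perturbation_le] with ω hpert hnohit ⟨t, htN, hlaunch, hnoise⟩
    have hrunaway := runawayHeight_le_abs_of_isAlignedExceedance hd hs1 hδ hM
      (escapeThreshold_pos hg) (mul_escapeThreshold_pow hd hg) (X := fun t => X t ω)
      (fun t => hproc.succ_eq t ω) hpert hlaunch fun j hj => (hnoise j hj).le
    exact hnohit ⟨t + m + 1, ⟨by omega, hlevel.trans hrunaway⟩, by omega⟩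
  calc μ.real {ω | ¬ ∃ t, (1 ≤ t ∧ level ≤ |X t ω|) ∧ t ≤ N + m} ≤ μ.real E :=
        ENNReal.toReal_mono (measure_ne_top _ _) (measure_mono_ae hmiss)
    _ ≤ exp (-(N * (gaussianReal 0 1).real (Set.Ici a))) +
          ∑ j ∈ Finset.range m, 1 / noiseAllowance s M j ^ 2 :=
        hproc.noise.measureReal_not_exists_isAlignedExceedance_le hproc.adapted a
          (noiseAllowance_pos hs (by linarith)) N m
    _ ≤ exp (-M) + ∑ j ∈ Finset.range m, 1 / noiseAllowance s M j ^ 2 := by gcongr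

end SingleRecursion

lemma nonempty_and_sInf_le_of_exists_le {P : ℕ → Prop} {T : ℕ} {τ : ℝ} (hT : (T : ℝ) ≤ τ)
    (h : ∃ t, P t ∧ t ≤ T) : {t | P t}.Nonempty ∧ ((sInf {t | P t} : ℕ) : ℝ) ≤ τ := by
  obtain ⟨t, ht, htT⟩ := h
  exact ⟨⟨t, ht⟩, le_trans (by exact_mod_cast (Nat.sInf_le ht).trans htT) hT⟩

lemma tendsto_measure_one_of_eventually_measureReal_compl_le {ι : Type*} {l : Filter ι}
    {Ω : ι → Type*} {mΩ : ∀ i, MeasurableSpace (Ω i)} {μ : ∀ i, Measure (Ω i)}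
    [∀ i, IsProbabilityMeasure (μ i)] {S : ∀ i, Set (Ω i)}
    (h : ∀ e > 0, ∀ᶠ i in l, (μ i).real (S i)ᶜ ≤ e) :
    Tendsto (fun i => μ i (S i)) l (nhds 1) := by
  have hreal : Tendsto (fun i => (μ i).real (S i)) l (nhds 1) := by
    refine tendsto_order.2 ⟨fun a ha => ?_, fun a ha => .of_forall fun i =>
      measureReal_le_one.trans_lt ha⟩
    filter_upwards [h ((1 - a) / 2) (by linarith)] with i hi
    have hcover := measureReal_union_le (μ := μ i) (S i) (S i)ᶜ
    rw [Set.union_compl_self, probReal_univ] at hcover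
    linarith
  rw [← ENNReal.toReal_one] at hreal
  exact (ENNReal.tendsto_toReal_iff (fun i => measure_ne_top _ _) ENNReal.one_ne_top).1 hreal

lemma exists_exp_neg_add_div_sq_le (K : ℝ) {e : ℝ} (he : 0 < e) :
    ∃ M ≥ 2, exp (-M) + K / M ^ 2 ≤ e := by
  have htendsto : Tendsto (fun M : ℝ => exp (-M) + K / M ^ 2) atTop (nhds 0) := by
    simpa using tendsto_exp_neg_atTop_nhds_zero.add
      ((tendsto_pow_atTop two_ne_zero).const_div_atTop K)
  exact ((eventually_ge_atTop 2).and (htendsto.eventually_le_const he)).exists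

section History

variable {Ω β : Type*} [mβ : MeasurableSpace β] {mΩ : MeasurableSpace Ω}

/-- The history generated by `Y` up to time `t` inclusive and by `Z` strictly before time `t`. -/
def historyFiltration (Y : ℕ → Ω → β) (Z : ℕ → Ω → ℝ) (hY : ∀ t, Measurable (Y t))
    (hZ : ∀ t, Measurable (Z t)) : Filtration ℕ mΩ where
  seq t := (⨆ s ∈ Set.Iic t, MeasurableSpace.comap (Y s) inferInstance) ⊔
    ⨆ s ∈ Set.Iio t, MeasurableSpace.comap (Z s) inferInstance
  mono' _ _ h := sup_le_sup (biSup_mono fun _ hs => le_trans hs h)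
    (biSup_mono fun _ hs => lt_of_lt_of_le hs h)
  le' _ := sup_le (iSup₂_le fun s _ => (hY s).comap_le) (iSup₂_le fun s _ => (hZ s).comap_le)

variable {Y : ℕ → Ω → β} {Z : ℕ → Ω → ℝ} (hY : ∀ t, Measurable (Y t))
  (hZ : ∀ t, Measurable (Z t))

lemma adapted_historyFiltration : Adapted (historyFiltration Y Z hY hZ) Y := fun t =>
  measurable_iff_comap_le.2 <|
    (le_iSup₂_of_le (f := fun s (_ : s ∈ Set.Iic t) => MeasurableSpace.comap (Y s) mβ)
      t Set.self_mem_Iic le_rfl).trans le_sup_left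

lemma measurable_succ_historyFiltration (t : ℕ) :
    Measurable[historyFiltration Y Z hY hZ (t + 1)] (Z t) :=
  measurable_iff_comap_le.2 <|
    (le_iSup₂_of_le (f := fun s (_ : s ∈ Set.Iio (t + 1)) =>
      MeasurableSpace.comap (Z s) inferInstance) t t.lt_succ_self le_rfl).trans le_sup_right

end History

lemma measurable_of_eq_mul_pow {Ω : Type*} [MeasurableSpace Ω] {X ζ b c Z : ℕ → Ω → ℝ} {g : ℝ}
    {p : ℕ} (hζ : ∀ t, Measurable (ζ t)) (hb : ∀ t, Measurable (b t))
    (hc : ∀ t, Measurable (c t)) (hZ : ∀ t, Measurable (Z t)) (hX0 : Measurable (X 0))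
    (hX : ∀ t ω, X (t + 1) ω = g * ζ t ω * (X t ω + b t ω + c t ω * Z t ω) ^ p) (t : ℕ) :
    Measurable (X t) := by
  induction t with
  | zero => exact hX0
  | succ t ih =>
    rw [funext (hX t)]
    fun_prop

lemma exists_filtration_isPerturbedPowerRecursion {Ω : Type*} [MeasurableSpace Ω] {μ : Measure Ω}
    {X ζ b c Z : ℕ → Ω → ℝ} {p : ℕ} {g δ : ℝ} (hX0 : Measurable (X 0))
    (hmeas : ∀ t, Measurable (ζ t) ∧ Measurable (b t) ∧ Measurable (c t) ∧ Measurable (Z t))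
    (hX : ∀ t ω, X (t + 1) ω = g * ζ t ω * (X t ω + b t ω + c t ω * Z t ω) ^ p)
    (hZlaw : ∀ t, μ.map (Z t) = gaussianReal 0 1)
    (hZindep : ∀ t, Indep (MeasurableSpace.comap (Z t) inferInstance)
      ((⨆ s ∈ Set.Iic t,
          MeasurableSpace.comap (fun ω => (X s ω, ζ s ω, b s ω, c s ω)) inferInstance)
        ⊔ (⨆ s ∈ Set.Iio t, MeasurableSpace.comap (Z s) inferInstance)) μ)
    (hpert : ∀ᵐ ω ∂μ, ∀ t, |ζ t ω - 1| ≤ δ ∧ |b t ω| ≤ δ ∧ |c t ω - 1| ≤ δ) :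
    ∃ ℱ, IsPerturbedPowerRecursion μ ℱ p g δ X ζ b c Z := by
  choose hζ hb hc hZ using hmeas
  have hXmeas := measurable_of_eq_mul_pow hζ hb hc hZ hX0 hX
  have hstate : ∀ t, Measurable fun ω => (X t ω, ζ t ω, b t ω, c t ω) := fun t => by fun_prop
  exact ⟨historyFiltration _ Z hstate hZ,
    { adapted := fun t => measurable_fst.comp (adapted_historyFiltration hstate hZ t)
      noise := ⟨measurable_succ_historyFiltration hstate hZ, hZlaw, hZindep⟩
      succ_eq := hX
      perturbation_le := hpert }⟩

lemma eventually_le_rpow_of_tendsto_log_div_log {γ : ℕ → ℝ} (hγpos : ∀ n, 0 < γ n)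
    (hγ : Tendsto (fun n : ℕ => log (γ n) / log n) atTop (nhds 0)) {r : ℝ} (hr : 0 < r) :
    ∀ᶠ n : ℕ in atTop, γ n ≤ (n : ℝ) ^ r := by
  filter_upwards [hγ.eventually_le_const hr, eventually_gt_atTop 1] with n hn hn1
  have hn1' : (1 : ℝ) < n := by exact_mod_cast hn1
  rw [le_rpow_iff_log_le (hγpos n) (by linarith)]
  exact (div_le_iff₀ (log_pos hn1')).1 hn

lemma tendsto_mul_natCast_rpow_neg (A : ℝ) {r : ℝ} (hr : r < 0) :
    Tendsto (fun n : ℕ => A * (n : ℝ) ^ r) atTop (nhds 0) := by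
  have := (tendsto_rpow_neg_atTop (neg_pos.2 hr)).comp tendsto_natCast_atTop_atTop
  simpa using this.const_mul A

section Sequence

variable {Ω : ℕ → Type*} {mΩ : ∀ n, MeasurableSpace (Ω n)} {μ : ∀ n, Measure (Ω n)}
  [∀ n, IsProbabilityMeasure (μ n)] {ℱ : ∀ n, Filtration ℕ (mΩ n)} {γ δ : ℕ → ℝ}
  {X ζ b c Z : ∀ n, ℕ → Ω n → ℝ}

theorem perturbed_process_hitting_time_upper_bound_general {k : ℕ} (hk : 3 ≤ k)
    (hγpos : ∀ n, 0 < γ n) (hγ : ∀ r : ℝ, 0 < r → ∀ᶠ n : ℕ in atTop, γ n ≤ (n : ℝ) ^ r)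
    (hδ : Tendsto δ atTop (nhds 0))
    (hproc : ∀ n, IsPerturbedPowerRecursion (μ n) (ℱ n) (k - 1) (γ n) (δ n)
      (X n) (ζ n) (b n) (c n) (Z n)) (ε : ℝ) {η : ℝ} (hη : 0 < η) :
    Tendsto (fun n : ℕ =>
        μ n {ω | {t : ℕ | 1 ≤ t ∧ (n : ℝ) ^ ε ≤ |X n t ω|}.Nonempty ∧
          ((sInf {t : ℕ | 1 ≤ t ∧ (n : ℝ) ^ ε ≤ |X n t ω|} : ℕ) : ℝ) ≤
            exp ((1 + η) / 2 * (1 / γ n) ^ (2 / ((k : ℝ) - 2))) + (1 + η) * logTerm k n (γ n)})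
      atTop (nhds 1) := by
  obtain ⟨d, rfl⟩ := Nat.exists_eq_add_of_le' (show 2 ≤ k by omega)
  have hd : d ≠ 0 := by omega
  have hcast : ((d + 2 : ℕ) : ℝ) - 2 = d := by push_cast; ring
  obtain ⟨s, hs, hs1, hsη⟩ := exists_one_add_pow_le hη 6
  obtain ⟨K, hK⟩ := exists_sum_one_div_noiseAllowance_sq_le hs
  refine tendsto_measure_one_of_eventually_measureReal_compl_le fun e he => ?_
  obtain ⟨M, hM, hMe⟩ := exists_exp_neg_add_div_sq_le K he
  filter_upwards [eventually_exists_trials_and_growth_steps hd hγpos hγ hs hs1 hη hsη hM ε,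
    hδ.eventually_le_const (show 0 < s / 100 by positivity)] with n ⟨N, m, hN, htime, hlevel⟩ hδn
  rw [escapeThreshold_sq (hγpos n).le] at htime
  rw [hcast]
  refine (measureReal_mono (Set.compl_subset_comm.1 fun ω hω =>
    nonempty_and_sInf_le_of_exists_le htime (not_not.1 hω))).trans ?_
  calc (μ n).real {ω | ¬ ∃ t, (1 ≤ t ∧ (n : ℝ) ^ ε ≤ |X n t ω|) ∧ t ≤ N + m}
      ≤ exp (-M) + ∑ j ∈ Finset.range m, 1 / noiseAllowance s M j ^ 2 :=
        (hproc n).measureReal_not_exists_le_abs_le hd (hγpos n) hs hs1 hδn (by linarith) hN hlevel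
    _ ≤ exp (-M) + K / M ^ 2 := by gcongr; exact hK M m
    _ ≤ e := hMe

end Sequence

/-- upper bound on the first time `T̄_ε` at which the perturbed polynomial
process exceeds `n^ε`. -/
theorem perturbed_process_hitting_time_upper_bound
    (k : ℕ) (hk : 3 ≤ k) (C : ℝ) (hC : 0 < C)
    (Ω : Type) [MeasurableSpace Ω] (μ : Measure Ω) [IsProbabilityMeasure μ]
    (γ : ℕ → ℝ) (hγpos : ∀ n, 0 < γ n)
    (hγup : Tendsto (fun n : ℕ => Real.log (γ n) / Real.log n) atTop (nhds 0))
    (hγlow : Tendsto (fun n : ℕ => γ n * Real.log n ^ (((k : ℝ) - 2) / 2)) atTop atTop)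
    (X ζ b c Z : ℕ → ℕ → Ω → ℝ)
    (hmeas : ∀ n t, Measurable (ζ n t) ∧ Measurable (b n t) ∧ Measurable (c n t) ∧
      Measurable (Z n t))
    (hX0 : ∀ n ω, X n 0 ω = 0)
    (hXrec : ∀ n t ω,
      X n (t + 1) ω = γ n * ζ n t ω * (X n t ω + b n t ω + c n t ω * Z n t ω) ^ (k - 1))
    (hZlaw : ∀ n t, Measure.map (Z n t) μ = gaussianReal 0 1)
    (hZindep : ∀ n t, Indep (MeasurableSpace.comap (Z n t) inferInstance)
      ((⨆ s ∈ Set.Iic t,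
          MeasurableSpace.comap (fun ω => (X n s ω, ζ n s ω, b n s ω, c n s ω)) inferInstance)
        ⊔ (⨆ s ∈ Set.Iio t, MeasurableSpace.comap (Z n s) inferInstance)) μ)
    (hpert : ∀ n, ∀ᵐ ω ∂μ, ∀ t,
      |ζ n t ω - 1| ≤ (C + 1) * (n : ℝ) ^ (-(1 : ℝ) / 6) ∧
      |b n t ω| ≤ (C + 1) * (n : ℝ) ^ (-(1 : ℝ) / 6) ∧
      |c n t ω - 1| ≤ (C + 1) * (n : ℝ) ^ (-(1 : ℝ) / 6)) :
    ∀ η : ℝ, 0 < η →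
      Tendsto (fun n : ℕ =>
          μ {ω | {t : ℕ | 1 ≤ t ∧
                (n : ℝ) ^ ((6 * (k : ℝ) - 11) / (12 * ((k : ℝ) - 1))) ≤ |X n t ω|}.Nonempty ∧
              ((sInf {t : ℕ | 1 ≤ t ∧
                  (n : ℝ) ^ ((6 * (k : ℝ) - 11) / (12 * ((k : ℝ) - 1))) ≤ |X n t ω|} : ℕ) : ℝ)
                ≤ Real.exp ((1 + η) / 2 * (1 / γ n) ^ (2 / ((k : ℝ) - 2)))
                  + (1 + η) * logTerm k n (γ n)})
        atTop (nhds 1) := by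
  choose ℱ hproc using fun n => exists_filtration_isPerturbedPowerRecursion
    (by simpa only [funext (hX0 n)] using measurable_const) (hmeas n) (hXrec n) (hZlaw n)
    (hZindep n) (hpert n)
  exact fun η hη => perturbed_process_hitting_time_upper_bound_general hk hγpos
    (fun _ => eventually_le_rpow_of_tendsto_log_div_log hγpos hγup)
    (tendsto_mul_natCast_rpow_neg (C + 1) (by norm_num : (-1 : ℝ) / 6 < 0)) hproc _ hη
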